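/- Let H be a cosemisimple Hopf algebra over an algebraically closed field and let V = ⊕_{α∈F} C_α be a direct sum of simple subcoalgebras of H (F a finite index set). Then for every n ≥ 1 the H-comodules V^{⊗n} (with comodule structure obtained from Δ^{⊗n} followed by multiplication in the last tensor factors) and V^n ⊆ H (with comodule structure given by comultiplication) have the same support: C(V^{⊗n}) = V^n. -/

import Mathlib

/-!
Background definitions: comodules over a Hopf algebra, simple comodules, direct
summands, supports, subcoalgebras, cosemisimplicity, Gelfand-Kirillov dimension,
and (measured) Grothendieck semirings of cosemisimple Hopf algebras.
-/

open TensorProduct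

/-- The data of a coaction of a Hopf algebra `H` on a `k`-vector space `X`:
a linear map `ρ : X → X ⊗ H`.  The comodule axioms are recorded separately in
`Comod.IsComodule`. -/
structure Comod (k : Type) [Field k] (H : Type) [Ring H] [HopfAlgebra k H] : Type 1 where
  X : Type
  [addCommGroup : AddCommGroup X]
  [module : Module k X]
  ρ : X →ₗ[k] X ⊗[k] H

attribute [instance] Comod.addCommGroup Comod.module

namespace Comod

variable {k : Type} [Field k] {H : Type} [Ring H] [HopfAlgebra k H]

/-- The trivial `H`-comodule `𝟏`, i.e. `k` with coaction `x ↦ x ⊗ 1`. -/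
noncomputable def unit (k : Type) [Field k] (H : Type) [Ring H] [HopfAlgebra k H] :
    Comod k H where
  X := k
  ρ := (TensorProduct.mk k k H).flip 1

/-- The regular comodule: `H` coacting on itself by comultiplication. -/
noncomputable def regular (k : Type) [Field k] (H : Type) [Ring H] [HopfAlgebra k H] :
    Comod k H where
  X := H
  ρ := Coalgebra.comul

/-- Tensor product of comodules: the coaction on `M ⊗ N` is
`(id ⊗ id ⊗ μ_H) ∘ (id ⊗ τ ⊗ id) ∘ (ρ_M ⊗ ρ_N)`. -/
noncomputable def tensor (M N : Comod k H) : Comod k H where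
  X := M.X ⊗[k] N.X
  ρ := (LinearMap.mul' k H).lTensor (M.X ⊗[k] N.X)
        ∘ₗ (TensorProduct.tensorTensorTensorComm k M.X H N.X H).toLinearMap
        ∘ₗ TensorProduct.map M.ρ N.ρ

/-- Binary direct sum of comodules. -/
noncomputable def dsum (M N : Comod k H) : Comod k H where
  X := M.X × N.X
  ρ := (LinearMap.inl k M.X N.X).rTensor H ∘ₗ M.ρ ∘ₗ LinearMap.fst k M.X N.X
     + (LinearMap.inr k M.X N.X).rTensor H ∘ₗ N.ρ ∘ₗ LinearMap.snd k M.X N.X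

/-- Finite direct sum of a family of comodules. -/
noncomputable def pi {ι : Type} [Fintype ι] (S : ι → Comod k H) : Comod k H where
  X := ∀ i, (S i).X
  ρ := letI := Classical.decEq ι
    ∑ i : ι, (LinearMap.single k (fun j => (S j).X) i).rTensor H ∘ₗ (S i).ρ
        ∘ₗ LinearMap.proj i

/-- `n`-th tensor power of a comodule (`M^{⊗0} = 𝟏`, `M^{⊗1} = M`). -/
noncomputable def tpow (M : Comod k H) : ℕ → Comod k H
  | 0 => unit k H
  | 1 => M
  | n + 2 => (M.tpow (n + 1)).tensor M

/-- A linear map is a map of comodules if it intertwines the coactions. -/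
def IsHom (M N : Comod k H) (f : M.X →ₗ[k] N.X) : Prop :=
  N.ρ ∘ₗ f = f.rTensor H ∘ₗ M.ρ

/-- Isomorphism of comodules. -/
def Iso (M N : Comod k H) : Prop :=
  ∃ e : M.X ≃ₗ[k] N.X, IsHom M N e.toLinearMap

/-- The comodule axioms (coassociativity and counitality) for a coaction. -/
def IsComodule (M : Comod k H) : Prop :=
  (M.ρ.rTensor H ∘ₗ M.ρ =
      (TensorProduct.assoc k M.X H H).symm.toLinearMap
        ∘ₗ (Coalgebra.comul (R := k) (A := H)).lTensor M.X ∘ₗ M.ρ) ∧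
  (TensorProduct.rid k M.X).toLinearMap
      ∘ₗ (Coalgebra.counit (R := k) (A := H)).lTensor M.X ∘ₗ M.ρ = LinearMap.id

/-- A subspace `N ⊆ M` is a subcomodule if the coaction restricts to `N ⊗ H`. -/
def IsSubcomodule (M : Comod k H) (N : Submodule k M.X) : Prop :=
  ∀ x ∈ N, M.ρ x ∈ LinearMap.range (N.subtype.rTensor H)

/-- Simple (hence finite-dimensional) comodules. -/
def IsSimple (M : Comod k H) : Prop :=
  M.IsComodule ∧ Nontrivial M.X ∧ FiniteDimensional k M.X ∧
    ∀ N : Submodule k M.X, M.IsSubcomodule N → N = ⊥ ∨ N = ⊤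

/-- `S` is a direct summand of `M` (as comodules): the inclusion splits. -/
def DirectSummand (S M : Comod k H) : Prop :=
  ∃ (i : S.X →ₗ[k] M.X) (p : M.X →ₗ[k] S.X),
    IsHom S M i ∧ IsHom M S p ∧ p ∘ₗ i = LinearMap.id

/-- `C` is the support of the comodule `M`: the (unique) minimal subspace
`C ⊆ H` with `ρ(M) ⊆ M ⊗ C`. -/
def IsSupport (M : Comod k H) (C : Submodule k H) : Prop :=
  (∀ x : M.X, M.ρ x ∈ LinearMap.range (C.subtype.lTensor M.X)) ∧
    ∀ C' : Submodule k H,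
      (∀ x : M.X, M.ρ x ∈ LinearMap.range (C'.subtype.lTensor M.X)) → C ≤ C'

end Comod

/-- A subspace `C ⊆ H` is a subcoalgebra if `Δ(C) ⊆ C ⊗ C`. -/
def IsSubcoalgebra (k : Type) [Field k] (H : Type) [Ring H] [HopfAlgebra k H]
    (C : Submodule k H) : Prop :=
  ∀ x ∈ C, Coalgebra.comul (R := k) x ∈
    LinearMap.range (TensorProduct.map C.subtype C.subtype)

/-- A simple subcoalgebra: a nonzero subcoalgebra with no proper nonzero
subcoalgebras. -/
def IsSimpleSubcoalgebra (k : Type) [Field k] (H : Type) [Ring H] [HopfAlgebra k H]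
    (C : Submodule k H) : Prop :=
  IsSubcoalgebra k H C ∧ C ≠ ⊥ ∧
    ∀ D : Submodule k H, D ≤ C → IsSubcoalgebra k H D → D = ⊥ ∨ D = C

/-- A Hopf algebra is cosemisimple if every subcomodule of every comodule is a
direct summand. -/
def IsCosemisimple (k : Type) [Field k] (H : Type) [Ring H] [HopfAlgebra k H] : Prop :=
  ∀ M : Comod k H, M.IsComodule →
    ∀ N : Submodule k M.X, M.IsSubcomodule N →
      ∃ N' : Submodule k M.X, M.IsSubcomodule N' ∧ IsCompl N N'

open scoped ENNReal in
/-- The Gelfand-Kirillov dimension of a `k`-algebra `A`: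
`sup_V limsup_n log(dim V^n)/log n` over finite-dimensional subspaces `V ⊆ A`
(for a finitely generated algebra this agrees with the value computed from any
finite-dimensional generating subspace containing `1`). -/
noncomputable def GKdim (k : Type) (A : Type) [Field k] [Ring A] [Algebra k A] : ℝ≥0∞ :=
  ⨆ (V : Submodule k A) (_ : FiniteDimensional k V),
    Filter.limsup
      (fun n : ℕ => ENNReal.ofReal
        (Real.log (Module.finrank k ↥(V ^ n)) / Real.log n)) Filter.atTop

/-- The (measured) Grothendieck semiring of a cosemisimple Hopf algebra `H`:
a commutative semiring `R` together with a class map `cls` on finite-dimensional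
`H`-comodules which is constant on isomorphism classes, additive on direct sums,
multiplicative on tensor products, sends `𝟏` to `1`, and induces a bijection
between iso-classes of finite-dimensional comodules and elements of `R`.
The dimension function `d_H` on `R_+(H)` is recovered as `cls M ↦ dim_k M`. -/
structure GrSemiring (k : Type) [Field k] (H : Type) [Ring H] [HopfAlgebra k H] :
    Type 1 where
  R : Type
  [commSemiring : CommSemiring R]
  cls : Comod k H → R
  cls_one : cls (Comod.unit k H) = 1
  cls_iso : ∀ M N : Comod k H, M.IsComodule → N.IsComodule →
    FiniteDimensional k M.X → FiniteDimensional k N.X → Comod.Iso M N → cls M = cls N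
  cls_dsum : ∀ M N : Comod k H, M.IsComodule → N.IsComodule →
    FiniteDimensional k M.X → FiniteDimensional k N.X →
      cls (M.dsum N) = cls M + cls N
  cls_tensor : ∀ M N : Comod k H, M.IsComodule → N.IsComodule →
    FiniteDimensional k M.X → FiniteDimensional k N.X →
      cls (M.tensor N) = cls M * cls N
  cls_surj : ∀ r : R, ∃ M : Comod k H, M.IsComodule ∧ FiniteDimensional k M.X ∧ cls M = r
  cls_inj : ∀ M N : Comod k H, M.IsComodule → N.IsComodule →
    FiniteDimensional k M.X → FiniteDimensional k N.X → cls M = cls N → Comod.Iso M N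

attribute [instance] GrSemiring.commSemiring

/-!
The support of a comodule is the span of its matrix coefficients, which lets it be computed one
functional at a time. The coefficients of `M ⊗ N` against functionals `f ⊗ g` are the products of
coefficients of `M` and `N`, so supports multiply under tensor products. A subcoalgebra, coacting on
itself by comultiplication, is its own support: the counit exhibits each of its elements as a
coefficient.
-/

section Slice

variable {R X X' W W' : Type*} [CommSemiring R] [AddCommMonoid X] [Module R X]
  [AddCommMonoid X'] [Module R X'] [AddCommMonoid W] [Module R W] [AddCommMonoid W'] [Module R W']

/-- The slice map `f ⊗ id : X ⊗ W → R ⊗ W = W` of a functional `f` on `X`. Slices of a coaction are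
the matrix coefficients of the comodule. -/
noncomputable def leftSlice (f : Module.Dual R X) : X ⊗[R] W →ₗ[R] W :=
  (TensorProduct.lid R W).toLinearMap ∘ₗ f.rTensor W

@[simp]
lemma leftSlice_tmul (f : Module.Dual R X) (x : X) (w : W) : leftSlice f (x ⊗ₜ[R] w) = f x • w :=
  rfl

lemma leftSlice_lTensor (f : Module.Dual R X) (g : W →ₗ[R] W') (t : X ⊗[R] W) :
    leftSlice f (g.lTensor X t) = g (leftSlice f t) := by
  induction t with
  | zero => simp only [map_zero]
  | tmul x w => simp
  | add s t hs ht => simp only [map_add, hs, ht]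

lemma leftSlice_rTensor (f : Module.Dual R X') (g : X →ₗ[R] X') (t : X ⊗[R] W) :
    leftSlice f (g.rTensor W t) = leftSlice (f ∘ₗ g) t := by
  simp only [leftSlice, LinearMap.rTensor_comp, LinearMap.comp_apply]

lemma eq_zero_of_forall_leftSlice_eq_zero [Module.Free R X] {t : X ⊗[R] W}
    (h : ∀ f : Module.Dual R X, leftSlice f t = 0) : t = 0 := by
  let b := Module.Free.chooseBasis R X
  refine (TensorProduct.equivFinsuppOfBasisLeft b).map_eq_zero_iff.1 (Finsupp.ext fun i ↦ ?_)
  exact (TensorProduct.equivFinsuppOfBasisLeft_apply b t i).trans (h (b.coord i))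

end Slice

lemma mem_range_lTensor_subtype_iff {R X W : Type*} [CommRing R] [AddCommGroup X] [Module R X]
    [Module.Free R X] [AddCommGroup W] [Module R W] {C : Submodule R W} {t : X ⊗[R] W} :
    t ∈ LinearMap.range (C.subtype.lTensor X) ↔ ∀ f : Module.Dual R X, leftSlice f t ∈ C := by
  constructor
  · rintro ⟨s, rfl⟩ f
    exact leftSlice_lTensor f C.subtype s ▸ (leftSlice f s).2
  · intro h
    have exact_mkQ : Function.Exact (C.subtype.lTensor X) (C.mkQ.lTensor X) :=
      lTensor_exact X (LinearMap.exact_subtype_mkQ C) C.mkQ_surjective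
    refine (exact_mkQ t).1 (eq_zero_of_forall_leftSlice_eq_zero fun f ↦ ?_)
    rw [leftSlice_lTensor]
    exact (Submodule.Quotient.mk_eq_zero C).2 (h f)

section TensorMul

variable {R A X Y : Type*} [CommSemiring R] [Semiring A] [Algebra R A]
  [AddCommMonoid X] [Module R X] [AddCommMonoid Y] [Module R Y]

variable (R A X Y) in
/-- The map `(X ⊗ A) ⊗ (Y ⊗ A) → (X ⊗ Y) ⊗ A` multiplying the two algebra factors, through which
the coaction on a tensor product of comodules is defined. -/
noncomputable def tensorMul : (X ⊗[R] A) ⊗[R] (Y ⊗[R] A) →ₗ[R] (X ⊗[R] Y) ⊗[R] A :=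
  (LinearMap.mul' R A).lTensor (X ⊗[R] Y) ∘ₗ
    (TensorProduct.tensorTensorTensorComm R X A Y A).toLinearMap

lemma leftSlice_tensorMul (f : Module.Dual R X) (g : Module.Dual R Y) (a : X ⊗[R] A)
    (b : Y ⊗[R] A) :
    leftSlice (LinearMap.mul' R R ∘ₗ TensorProduct.map f g) (tensorMul R A X Y (a ⊗ₜ b)) =
      leftSlice f a * leftSlice g b := by
  suffices leftSlice (LinearMap.mul' R R ∘ₗ TensorProduct.map f g) ∘ₗ tensorMul R A X Y =
      LinearMap.mul' R A ∘ₗ TensorProduct.map (leftSlice f) (leftSlice g) from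
    LinearMap.congr_fun this (a ⊗ₜ b)
  ext x c y d
  simp [tensorMul, smul_smul, mul_comm]

lemma tensorMul_mem_range_lTensor_subtype {C D : Submodule R A} {a : X ⊗[R] A} {b : Y ⊗[R] A}
    (ha : a ∈ LinearMap.range (C.subtype.lTensor X))
    (hb : b ∈ LinearMap.range (D.subtype.lTensor Y)) :
    tensorMul R A X Y (a ⊗ₜ b) ∈ LinearMap.range ((C * D).subtype.lTensor (X ⊗[R] Y)) := by
  obtain ⟨a, rfl⟩ := ha
  obtain ⟨b, rfl⟩ := hb
  have factor : tensorMul R A X Y ∘ₗ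
        TensorProduct.map (C.subtype.lTensor X) (D.subtype.lTensor Y) =
      (C * D).subtype.lTensor (X ⊗[R] Y) ∘ₗ (C.mulMap' D).lTensor (X ⊗[R] Y) ∘ₗ
        (TensorProduct.tensorTensorTensorComm R X C Y D).toLinearMap := by
    ext x c y d
    simp [tensorMul]
  exact ⟨_, (LinearMap.congr_fun factor (a ⊗ₜ b)).symm⟩

end TensorMul

section Coefficients

variable {k : Type} [Field k] {H : Type} [Ring H] [HopfAlgebra k H]

namespace IsSubcoalgebra

lemma bot : IsSubcoalgebra k H ⊥ := by
  rintro x rfl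
  simp only [map_zero, zero_mem]

lemma sup {C D : Submodule k H} (hC : IsSubcoalgebra k H C) (hD : IsSubcoalgebra k H D) :
    IsSubcoalgebra k H (C ⊔ D) := by
  change C ⊔ D ≤ (LinearMap.range (TensorProduct.mapIncl (C ⊔ D) (C ⊔ D))).comap Coalgebra.comul
  refine sup_le (fun x hx ↦ ?_) fun x hx ↦ ?_
  · exact TensorProduct.range_mapIncl_mono le_sup_left le_sup_left (hC x hx)
  · exact TensorProduct.range_mapIncl_mono le_sup_right le_sup_right (hD x hx)

lemma sum {ι : Type*} {F : Finset ι} {C : ι → Submodule k H}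
    (hC : ∀ α ∈ F, IsSubcoalgebra k H (C α)) : IsSubcoalgebra k H (∑ α ∈ F, C α) :=
  Finset.sum_induction C (IsSubcoalgebra k H) (fun _ _ ↦ sup) bot hC

lemma leftSlice_comul_mem {C : Submodule k H} (hC : IsSubcoalgebra k H C) (f : Module.Dual k H)
    {x : H} (hx : x ∈ C) : leftSlice f (Coalgebra.comul (R := k) x) ∈ C := by
  obtain ⟨s, hs⟩ := hC x hx
  rw [← hs, ← LinearMap.lTensor_comp_rTensor, LinearMap.comp_apply, leftSlice_lTensor]
  exact SetLike.coe_mem _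

end IsSubcoalgebra

namespace Comod

variable {M N : Comod k H}

variable (M) in
/-- The coefficient space of `M`: the span of the matrix coefficients `(f ⊗ id) (ρ x)`. It is the
support of `M`, see `Comod.isSupport_coeffSpace`. -/
noncomputable def coeffSpace : Submodule k H :=
  Submodule.span k {h | ∃ (f : Module.Dual k M.X) (x : M.X), leftSlice f (M.ρ x) = h}

lemma leftSlice_ρ_mem_coeffSpace (f : Module.Dual k M.X) (x : M.X) :
    leftSlice f (M.ρ x) ∈ M.coeffSpace :=
  Submodule.subset_span ⟨f, x, rfl⟩

lemma coeffSpace_le_iff {C : Submodule k H} :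
    M.coeffSpace ≤ C ↔ ∀ (f : Module.Dual k M.X) (x : M.X), leftSlice f (M.ρ x) ∈ C := by
  refine ⟨fun h f x ↦ h (leftSlice_ρ_mem_coeffSpace f x), fun h ↦ Submodule.span_le.2 ?_⟩
  rintro _ ⟨f, x, rfl⟩
  exact h f x

lemma coeffSpace_le_iff_ρ_mem_range {C : Submodule k H} :
    M.coeffSpace ≤ C ↔ ∀ x, M.ρ x ∈ LinearMap.range (C.subtype.lTensor M.X) := by
  rw [coeffSpace_le_iff, forall_comm]
  simp only [mem_range_lTensor_subtype_iff]

lemma ρ_mem_range (x : M.X) : M.ρ x ∈ LinearMap.range (M.coeffSpace.subtype.lTensor M.X) :=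
  coeffSpace_le_iff_ρ_mem_range.1 le_rfl x

lemma isSupport_coeffSpace : M.IsSupport M.coeffSpace :=
  ⟨ρ_mem_range, fun _ ↦ coeffSpace_le_iff_ρ_mem_range.2⟩

lemma coeffSpace_unit : (unit k H).coeffSpace = 1 := by
  refine le_antisymm (coeffSpace_le_iff.2 fun f x ↦ ?_) (Submodule.one_le.2 ?_)
  · exact Submodule.smul_mem _ (f x) (Submodule.one_le.1 le_rfl)
  · have one_smul_mem : (1 : k) • (1 : H) ∈ (unit k H).coeffSpace :=
      leftSlice_ρ_mem_coeffSpace (M := unit k H) LinearMap.id (1 : k)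
    rwa [one_smul] at one_smul_mem

variable (M N) in
lemma coeffSpace_tensor : (M.tensor N).coeffSpace = M.coeffSpace * N.coeffSpace := by
  apply le_antisymm
  · refine coeffSpace_le_iff_ρ_mem_range.2 fun (t : M.X ⊗[k] N.X) ↦ ?_
    induction t with
    | zero => exact (map_zero (M.tensor N).ρ).symm ▸ zero_mem _
    | tmul x y => exact tensorMul_mem_range_lTensor_subtype (ρ_mem_range x) (ρ_mem_range y)
    | add s t hs ht => exact (map_add (M.tensor N).ρ s t).symm ▸ add_mem hs ht
  · rw [coeffSpace, coeffSpace, Submodule.span_mul_span, Submodule.span_le]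
    rintro _ ⟨_, ⟨f, x, rfl⟩, _, ⟨g, y, rfl⟩, rfl⟩
    change leftSlice f (M.ρ x) * leftSlice g (N.ρ y) ∈ (M.tensor N).coeffSpace
    rw [← leftSlice_tensorMul]
    exact leftSlice_ρ_mem_coeffSpace (M := M.tensor N) _ (x ⊗ₜ[k] y : M.X ⊗[k] N.X)

variable (M) in
lemma coeffSpace_tpow : ∀ n, (M.tpow n).coeffSpace = M.coeffSpace ^ n
  | 0 => coeffSpace_unit.trans (pow_zero _).symm
  | 1 => (pow_one _).symm
  | n + 2 => by rw [tpow, coeffSpace_tensor, coeffSpace_tpow (n + 1), ← pow_succ]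

namespace IsHom

variable {f : M.X →ₗ[k] H}

lemma range_le_coeffSpace (hf : M.IsHom (regular k H) f) : LinearMap.range f ≤ M.coeffSpace := by
  rintro _ ⟨x, rfl⟩
  have counit_slice : leftSlice (Coalgebra.counit ∘ₗ f) (M.ρ x) = f x := calc
    _ = leftSlice Coalgebra.counit (f.rTensor H (M.ρ x)) := (leftSlice_rTensor _ _ _).symm
    _ = leftSlice Coalgebra.counit (Coalgebra.comul (f x)) :=
      congrArg _ (LinearMap.congr_fun hf x).symm
    _ = f x := by simp [leftSlice]
  exact counit_slice ▸ leftSlice_ρ_mem_coeffSpace _ x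

lemma coeffSpace_le_range (hf : M.IsHom (regular k H) f) (hinj : Function.Injective f)
    (hsub : IsSubcoalgebra k H (LinearMap.range f)) : M.coeffSpace ≤ LinearMap.range f := by
  refine coeffSpace_le_iff.2 fun φ x ↦ ?_
  obtain ⟨ψ, rfl⟩ : ∃ ψ : Module.Dual k H, ψ ∘ₗ f = φ :=
    LinearMap.dualMap_surjective_of_injective hinj φ
  have comul_slice : leftSlice (ψ ∘ₗ f) (M.ρ x) = leftSlice ψ (Coalgebra.comul (f x)) :=
    (leftSlice_rTensor _ _ _).symm.trans (congrArg _ (LinearMap.congr_fun hf x).symm)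
  exact comul_slice ▸ hsub.leftSlice_comul_mem ψ ⟨x, rfl⟩

lemma coeffSpace_eq_range (hf : M.IsHom (regular k H) f) (hinj : Function.Injective f)
    (hsub : IsSubcoalgebra k H (LinearMap.range f)) : M.coeffSpace = LinearMap.range f :=
  (hf.coeffSpace_le_range hinj hsub).antisymm hf.range_le_coeffSpace

end IsHom

end Comod

theorem stmt15_general {V : Submodule k H} (hV : IsSubcoalgebra k H V) {ρV : V →ₗ[k] V ⊗[k] H}
    (hρV : V.subtype.rTensor H ∘ₗ ρV = Coalgebra.comul (R := k) (A := H) ∘ₗ V.subtype) (n : ℕ) :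
    Comod.IsSupport ((Comod.mk (X := V) ρV).tpow n) (V ^ n) := by
  let M : Comod k H := Comod.mk (X := V) ρV
  have hom : M.IsHom (Comod.regular k H) V.subtype := hρV.symm
  have hrange : IsSubcoalgebra k H (LinearMap.range V.subtype) := V.range_subtype.symm ▸ hV
  have coeffSpace_eq : (M.tpow n).coeffSpace = V ^ n := by
    rw [M.coeffSpace_tpow, hom.coeffSpace_eq_range V.subtype_injective hrange, V.range_subtype]
  exact coeffSpace_eq ▸ Comod.isSupport_coeffSpace

end Coefficients

/-- second half of the proof of Lemma 2.3.  Let `H` be a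
cosemisimple Hopf algebra over an algebraically closed field and
`V = ⊕_{α ∈ F} C_α` a direct sum of simple subcoalgebras of `H`.  Since
`Δ(V) ⊆ V ⊗ V ⊆ V ⊗ H`, comultiplication induces a coaction `ρ_V` on `V`
(the hypothesis `hρV` states exactly that `ρ_V` is induced by `Δ`).  Then for
every `n ≥ 1` the comodules `V^{⊗ n}` (with coaction `Δ^{⊗n}` followed by
multiplication in the last tensor factors) and the subcoalgebra `V^n ⊆ H` (a
comodule via `Δ`) have the same support; namely `C(V^{⊗ n}) = V^n`. -/
theorem stmt15 (k : Type) [Field k] [IsAlgClosed k]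
    (H : Type) [Ring H] [HopfAlgebra k H]
    (hcss : IsCosemisimple k H)
    (ι : Type) (F : Finset ι) (C : ι → Submodule k H)
    (hC : ∀ α ∈ F, IsSimpleSubcoalgebra k H (C α))
    (hindep : iSupIndep fun a : ↥F => C a.1)
    (V : Submodule k H) (hV : V = ∑ α ∈ F, C α)
    (ρV : ↥V →ₗ[k] ↥V ⊗[k] H)
    (hρV : V.subtype.rTensor H ∘ₗ ρV =
      (Coalgebra.comul (R := k) (A := H)) ∘ₗ V.subtype)
    (n : ℕ) (hn : 1 ≤ n) :
    Comod.IsSupport ((Comod.mk (X := ↥V) ρV).tpow n) (V ^ n) := by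
  subst hV
  exact stmt15_general (IsSubcoalgebra.sum fun α hα ↦ (hC α hα).1) hρV n
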